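/- arXiv:1102.3235 — 3 statements merged into one kernel-verified Lean document; each statement's English description precedes it below -/
import Mathlib

section
/- Let (Ω, P) be a probability space, m ≥ 1, and let X : Fin m → Ω → 𝒳, Y : Fin m → Ω → 𝒴 be families of measurable random variables with values in finite measurable spaces with measurable singletons, and C : Ω → 𝒞 another such random variable. For k ∈ [1:m] write X^{<k} for the tuple (X_1,…,X_{k−1}), Y^{≤k} for (Y_1,…,Y_k), Y^{<k} for (Y_1,…,Y_{k−1}), and X^{≥ℓ} for (X_ℓ,…,X_m). Then ∑_{k=1}^{m} I[X_k : Y^{≤k} | ⟨X^{<k}, C⟩] = ∑_{ℓ=1}^{m} I[X^{≥ℓ} : Y_ℓ | ⟨X^{<ℓ}, Y^{<ℓ}, C⟩]. -/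
open MeasureTheory

/-- Shannon entropy `H[X]` of a finitely-valued random variable `X` on a measure space. -/
noncomputable def entropy {Ω S : Type*} [MeasurableSpace Ω] [Fintype S] [MeasurableSpace S]
    (P : Measure Ω) (X : Ω → S) : ℝ :=
  ∑ x : S, Real.negMulLog ((P.map X) {x}).toReal

/-- Conditional mutual information
`I[X : Y | Z] = H[X, Z] + H[Y, Z] − H[X, Y, Z] − H[Z]`. -/
noncomputable def condMutualInfo {Ω S T U : Type*} [MeasurableSpace Ω]
    [Fintype S] [MeasurableSpace S] [Fintype T] [MeasurableSpace T]
    [Fintype U] [MeasurableSpace U]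
    (P : Measure Ω) (X : Ω → S) (Y : Ω → T) (Z : Ω → U) : ℝ :=
  entropy P (fun ω => (X ω, Z ω)) + entropy P (fun ω => (Y ω, Z ω))
    - entropy P (fun ω => (X ω, Y ω, Z ω)) - entropy P Z

/-!
The entropy of a finitely-valued random variable depends only on the partition of `Ω` into its
fibres, i.e. on its kernel, and tuples correspond to infima of kernels. Hence, with
`F a b = H[X_1, …, X_a, Y_1, …, Y_b, C]`, every term of either sum is a mixed difference of `F`:
```
I[X_k : Y^{≤k} | ⟨X^{<k}, C⟩]          = F k 0 + F (k-1) k - F k k - F (k-1) 0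
I[X^{≥ℓ} : Y_ℓ | ⟨X^{<ℓ}, Y^{<ℓ}, C⟩] = F m (ℓ-1) + F (ℓ-1) ℓ - F m ℓ - F (ℓ-1) (ℓ-1)
```
The terms `F (k-1) k` are common to both sums, and everything else telescopes.
-/

/-- The Shannon entropy of a partition of `Ω`, encoded as an equivalence relation, so that
partitions form a lattice whose infimum is the common refinement. A `finsum` is used because the
partitions of interest are finite only by virtue of being kernels of finitely-valued maps. -/
noncomputable def partitionEntropy {Ω : Type*} [MeasurableSpace Ω] (P : Measure Ω)
    (r : Setoid Ω) : ℝ :=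
  ∑ᶠ s ∈ r.classes, Real.negMulLog (P s).toReal

theorem ker_prodMk {α β γ : Type*} (f : α → β) (g : α → γ) :
    Setoid.ker (fun a => (f a, g a)) = Setoid.ker f ⊓ Setoid.ker g :=
  Setoid.ext fun _ _ => Prod.mk_inj

theorem ker_pi {α ι : Type*} {β : ι → Type*} (f : ∀ i, α → β i) :
    Setoid.ker (fun a i => f i a) = ⨅ i, Setoid.ker (f i) :=
  Setoid.ext fun a b => by
    rw [iInf, Setoid.sInf_iff, Set.forall_mem_range]
    exact funext_iff

theorem mem_classes_ker_iff {α β : Type*} {f : α → β} {s : Set α} (hs : s.Nonempty) :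
    s ∈ (Setoid.ker f).classes ↔ s ∈ Set.range fun b => f ⁻¹' {b} := by
  constructor
  · rintro ⟨a, rfl⟩
    exact ⟨f a, rfl⟩
  · rintro ⟨_, rfl⟩
    obtain ⟨a, rfl⟩ := hs
    exact ⟨a, rfl⟩

theorem preimage_singleton_injOn {α β : Type*} (f : α → β) :
    {b | (f ⁻¹' {b}).Nonempty}.InjOn fun b => f ⁻¹' {b} := by
  rintro _ ⟨a, rfl⟩ c _ hac
  exact (Set.ext_iff.1 hac a).1 rfl

section Entropy

variable {Ω S T U : Type*} [MeasurableSpace Ω]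
  [Fintype S] [MeasurableSpace S] [MeasurableSingletonClass S]
  [Fintype T] [MeasurableSpace T] [MeasurableSingletonClass T]
  [Fintype U] [MeasurableSpace U] [MeasurableSingletonClass U]
  {P : Measure Ω} {X : Ω → S} {Y : Ω → T} {Z : Ω → U}

theorem entropy_eq_partitionEntropy_ker (hX : AEMeasurable X P) :
    entropy P X = partitionEntropy P (Setoid.ker X) := by
  set h : Set Ω → ℝ := fun s => Real.negMulLog (P s).toReal
  have nonempty_of_mem_support : ∀ s ∈ h.support, s.Nonempty := by
    intro s hs
    rw [Set.nonempty_iff_ne_empty]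
    rintro rfl
    simp [h] at hs
  calc entropy P X
      = ∑ x, h (X ⁻¹' {x}) := by
        simp only [entropy, h, Measure.map_apply_of_aemeasurable hX (measurableSet_singleton _)]
    _ = ∑ᶠ x, h (X ⁻¹' {x}) := (finsum_eq_sum_of_fintype _).symm
    _ = ∑ᶠ s ∈ Set.range fun x => X ⁻¹' {x}, h s :=
        (finsum_mem_range' (f := h) ((preimage_singleton_injOn X).mono fun x hx =>
          nonempty_of_mem_support (X ⁻¹' {x}) hx)).symm
    _ = partitionEntropy P (Setoid.ker X) :=
        finsum_mem_inter_support_eq' _ _ _ fun s hs =>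
          (mem_classes_ker_iff (nonempty_of_mem_support s hs)).symm

theorem condMutualInfo_eq_partitionEntropy_ker (hX : AEMeasurable X P) (hY : AEMeasurable Y P)
    (hZ : AEMeasurable Z P) :
    condMutualInfo P X Y Z =
      partitionEntropy P (Setoid.ker X ⊓ Setoid.ker Z)
        + partitionEntropy P (Setoid.ker Y ⊓ Setoid.ker Z)
        - partitionEntropy P (Setoid.ker X ⊓ (Setoid.ker Y ⊓ Setoid.ker Z))
        - partitionEntropy P (Setoid.ker Z) := by
  rw [condMutualInfo, entropy_eq_partitionEntropy_ker (hX.prodMk hZ),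
    entropy_eq_partitionEntropy_ker (hY.prodMk hZ),
    entropy_eq_partitionEntropy_ker (hX.prodMk (hY.prodMk hZ)),
    entropy_eq_partitionEntropy_ker hZ]
  simp only [ker_prodMk]

end Entropy

/-- The infimum of the first `a` members of a finite family; for kernels of random variables
`X_1, …, X_m` this is the partition generated by `X_1, …, X_a`. Values `a > m` are allowed and
give the infimum of the whole family. -/
def prefixInf {L : Type*} [InfSet L] {m : ℕ} (x : Fin m → L) (a : ℕ) : L :=
  ⨅ (i : Fin m) (_ : i.val < a), x i

section PrefixInf

variable {L : Type*} [CompleteLattice L] {m : ℕ} (x : Fin m → L)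

theorem prefixInf_le {a : ℕ} {i : Fin m} (hi : i.val < a) : prefixInf x a ≤ x i :=
  iInf₂_le i hi

theorem prefixInf_zero : prefixInf x 0 = ⊤ := by
  simp [prefixInf]

theorem prefixInf_succ (k : Fin m) : prefixInf x (k.val + 1) = x k ⊓ prefixInf x k.val := by
  have lt_succ_iff (i : Fin m) : i.val < k.val + 1 ↔ i = k ∨ i.val < k.val := by omega
  simp only [prefixInf, lt_succ_iff, iInf_or, iInf_inf_eq, iInf_iInf_eq_left]

theorem iInf_castLE_eq_prefixInf {a : ℕ} (ha : a ≤ m) :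
    ⨅ i : Fin a, x (Fin.castLE ha i) = prefixInf x a :=
  le_antisymm (le_iInf₂ fun i hi => iInf_le (fun j => x (Fin.castLE ha j)) ⟨i, hi⟩)
    (le_iInf fun i => prefixInf_le x i.isLt)

theorem iInf_suffix_inf_prefixInf (a : ℕ) :
    (⨅ i : Fin (m - a), x ⟨a + i.val, by omega⟩) ⊓ prefixInf x a = prefixInf x m := by
  apply le_antisymm
  · refine le_iInf₂ fun i _ => ?_
    obtain hi | hi := lt_or_ge i.val a
    · exact inf_le_of_right_le (prefixInf_le x hi)
    · refine inf_le_of_left_le ((iInf_le _ ⟨i.val - a, by omega⟩).trans_eq ?_)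
      exact congrArg x (Fin.ext (Nat.add_sub_cancel' hi))
  · exact le_inf (le_iInf fun i => prefixInf_le x (Fin.isLt _))
      (le_iInf₂ fun i _ => prefixInf_le x i.isLt)

end PrefixInf

/-- The joint entropy `H[X_1, …, X_a, Y_1, …, Y_b, C]`. -/
noncomputable def prefixEntropy {Ω 𝒞 : Type*} [MeasurableSpace Ω] {m n : ℕ}
    {𝒳 : Fin m → Type*} {𝒴 : Fin n → Type*} (P : Measure Ω)
    (X : ∀ i, Ω → 𝒳 i) (Y : ∀ j, Ω → 𝒴 j) (C : Ω → 𝒞) (a b : ℕ) : ℝ :=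
  partitionEntropy P (prefixInf (fun i => Setoid.ker (X i)) a ⊓
    prefixInf (fun j => Setoid.ker (Y j)) b ⊓ Setoid.ker C)

section PrefixEntropy

variable {Ω 𝒞 : Type*} [MeasurableSpace Ω] {m n : ℕ} {𝒳 : Fin m → Type*} {𝒴 : Fin n → Type*}
  [∀ i, Fintype (𝒳 i)] [∀ i, MeasurableSpace (𝒳 i)] [∀ i, MeasurableSingletonClass (𝒳 i)]
  [∀ j, Fintype (𝒴 j)] [∀ j, MeasurableSpace (𝒴 j)] [∀ j, MeasurableSingletonClass (𝒴 j)]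
  [Fintype 𝒞] [MeasurableSpace 𝒞] [MeasurableSingletonClass 𝒞]
  {P : Measure Ω} {X : ∀ i, Ω → 𝒳 i} {Y : ∀ j, Ω → 𝒴 j} {C : Ω → 𝒞}

theorem condMutualInfo_coordinate_prefix (hX : ∀ i, AEMeasurable (X i) P)
    (hY : ∀ j, AEMeasurable (Y j) P) (hC : AEMeasurable C P) (k : Fin m) {b : ℕ} (hb : b ≤ n) :
    condMutualInfo P (X k) (fun ω => fun i : Fin b => Y (Fin.castLE hb i) ω)
        (fun ω => ((fun i : Fin k.val => X (Fin.castLE k.isLt.le i) ω), C ω))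
      = prefixEntropy P X Y C (k + 1) 0 + prefixEntropy P X Y C k b
        - prefixEntropy P X Y C (k + 1) b - prefixEntropy P X Y C k 0 := by
  rw [condMutualInfo_eq_partitionEntropy_ker (hX k) (by fun_prop) (by fun_prop), ker_prodMk,
    ker_pi, ker_pi, iInf_castLE_eq_prefixInf (fun j => Setoid.ker (Y j)),
    iInf_castLE_eq_prefixInf (fun i => Setoid.ker (X i))]
  simp only [prefixEntropy, prefixInf_succ, prefixInf_zero, top_inf_eq,
    inf_assoc, inf_comm, inf_left_comm]

theorem condMutualInfo_suffix_coordinate (hX : ∀ i, AEMeasurable (X i) P)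
    (hY : ∀ j, AEMeasurable (Y j) P) (hC : AEMeasurable C P) {a : ℕ} (ha : a ≤ m) (l : Fin n) :
    condMutualInfo P (fun ω => fun i : Fin (m - a) => X ⟨a + i.val, by omega⟩ ω) (Y l)
        (fun ω => ((fun i : Fin a => X (Fin.castLE ha i) ω),
          (fun j : Fin l.val => Y (Fin.castLE l.isLt.le j) ω), C ω))
      = prefixEntropy P X Y C m l + prefixEntropy P X Y C a (l + 1)
        - prefixEntropy P X Y C m (l + 1) - prefixEntropy P X Y C a l := by
  rw [condMutualInfo_eq_partitionEntropy_ker (by fun_prop) (hY l) (by fun_prop), ker_prodMk,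
    ker_prodMk, ker_pi, ker_pi, ker_pi, iInf_castLE_eq_prefixInf (fun i => Setoid.ker (X i)),
    iInf_castLE_eq_prefixInf (fun j => Setoid.ker (Y j))]
  simp only [prefixEntropy, prefixInf_succ,
    ← iInf_suffix_inf_prefixInf (fun i => Setoid.ker (X i)) a,
    inf_assoc, inf_comm, inf_left_comm]

end PrefixEntropy

theorem sum_range_mixed_difference_swap {G : Type*} [AddCommGroup G] (F : ℕ → ℕ → G) (m : ℕ) :
    ∑ k ∈ Finset.range m, (F (k + 1) 0 + F k (k + 1) - F (k + 1) (k + 1) - F k 0)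
      = ∑ l ∈ Finset.range m, (F m l + F l (l + 1) - F m (l + 1) - F l l) := by
  rw [← sub_eq_zero, ← Finset.sum_sub_distrib]
  calc _ = ∑ k ∈ Finset.range m, ((F (k + 1) 0 - F k 0) + (F m (k + 1) - F m k)
          - (F (k + 1) (k + 1) - F k k)) := Finset.sum_congr rfl fun k _ => by abel
    _ = (F m 0 - F 0 0) + (F m m - F m 0) - (F m m - F 0 0) := by
        rw [Finset.sum_sub_distrib, Finset.sum_add_distrib, Finset.sum_range_sub (F · 0),
          Finset.sum_range_sub (F m), Finset.sum_range_sub fun k => F k k]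
    _ = 0 := by abel

theorem sum_condMutualInfo_chain_swap_general
    {Ω 𝒞 : Type*} [MeasurableSpace Ω] {m : ℕ} {𝒳 𝒴 : Fin m → Type*}
    [∀ i, Fintype (𝒳 i)] [∀ i, MeasurableSpace (𝒳 i)] [∀ i, MeasurableSingletonClass (𝒳 i)]
    [∀ i, Fintype (𝒴 i)] [∀ i, MeasurableSpace (𝒴 i)] [∀ i, MeasurableSingletonClass (𝒴 i)]
    [Fintype 𝒞] [MeasurableSpace 𝒞] [MeasurableSingletonClass 𝒞]
    (X : ∀ i, Ω → 𝒳 i) (Y : ∀ i, Ω → 𝒴 i) (C : Ω → 𝒞) (P : Measure Ω) [IsFiniteMeasure P]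
    (hX : ∀ k, AEMeasurable (X k) P) (hY : ∀ k, AEMeasurable (Y k) P) (hC : AEMeasurable C P) :
    ∑ k : Fin m,
        condMutualInfo P (X k)
          (fun ω => fun i : Fin (k.val + 1) => Y (Fin.castLE k.isLt i) ω)
          (fun ω => ((fun i : Fin k.val => X (Fin.castLE k.isLt.le i) ω), C ω))
      = ∑ l : Fin m,
        condMutualInfo P
          (fun ω => fun i : Fin (m - l.val) => X ⟨l.val + i.val, by omega⟩ ω)
          (Y l)
          (fun ω => ((fun i : Fin l.val => X (Fin.castLE l.isLt.le i) ω),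
                     (fun i : Fin l.val => Y (Fin.castLE l.isLt.le i) ω), C ω)) := by
  have row (k : Fin m) := condMutualInfo_coordinate_prefix hX hY hC k k.isLt
  have column (l : Fin m) := condMutualInfo_suffix_coordinate hX hY hC l.isLt.le l
  rw [Fintype.sum_congr _ _ row, Fintype.sum_congr _ _ column]
  simpa only [Finset.sum_range] using
    sum_range_mixed_difference_swap (prefixEntropy P X Y C) m

/-- For families `X_1,…,X_m`, `Y_1,…,Y_m` and `C` of finitely-valued random
variables on a probability space (indices `0,…,m−1` in `Fin m`, matching the paper's `1,…,m`),
`∑_{k=1}^{m} I[X_k : Y^{≤k} | ⟨X^{<k}, C⟩]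
  = ∑_{ℓ=1}^{m} I[X^{≥ℓ} : Y_ℓ | ⟨X^{<ℓ}, Y^{<ℓ}, C⟩]`,
where `X^{<k} = (X_1,…,X_{k−1})`, `Y^{≤k} = (Y_1,…,Y_k)`, `Y^{<k} = (Y_1,…,Y_{k−1})` and
`X^{≥ℓ} = (X_ℓ,…,X_m)`. -/
theorem sum_condMutualInfo_chain_swap
    {Ω 𝒳 𝒴 𝒞 : Type*} [MeasurableSpace Ω]
    [Fintype 𝒳] [MeasurableSpace 𝒳] [MeasurableSingletonClass 𝒳]
    [Fintype 𝒴] [MeasurableSpace 𝒴] [MeasurableSingletonClass 𝒴]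
    [Fintype 𝒞] [MeasurableSpace 𝒞] [MeasurableSingletonClass 𝒞]
    (m : ℕ) (hm : 1 ≤ m)
    (X : Fin m → Ω → 𝒳) (Y : Fin m → Ω → 𝒴) (C : Ω → 𝒞)
    (hX : ∀ k, Measurable (X k)) (hY : ∀ k, Measurable (Y k)) (hC : Measurable C)
    (P : Measure Ω) [IsProbabilityMeasure P] :
    ∑ k : Fin m,
        condMutualInfo P (X k)
          (fun ω => fun i : Fin (k.val + 1) => Y (Fin.castLE k.isLt i) ω)
          (fun ω => ((fun i : Fin k.val => X (Fin.castLE k.isLt.le i) ω), C ω))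
      = ∑ l : Fin m,
        condMutualInfo P
          (fun ω => fun i : Fin (m - l.val) =>
            X ⟨l.val + i.val, by have h1 := i.isLt; have h2 := l.isLt; omega⟩ ω)
          (Y l)
          (fun ω => ((fun i : Fin l.val => X (Fin.castLE l.isLt.le i) ω),
                     (fun i : Fin l.val => Y (Fin.castLE l.isLt.le i) ω), C ω)) := by
  exact sum_condMutualInfo_chain_swap_general X Y C P (fun k => (hX k).aemeasurable)
    (fun k => (hY k).aemeasurable) hC.aemeasurable
end

section
/- Let (Ω, P) be a probability space, K ≥ 1, and let X : Fin K → Ω → 𝒳 be a family of measurable random variables with values in a finite measurable space with measurable singletons; write X_all : Ω → (Fin K → 𝒳) for ω ↦ (fun i => X_i ω). Let 𝒮 ⊆ Fin K be a nonempty set of indices and, for each k ∈ 𝒮, let Y_k : Ω → 𝒴 and S_k : Ω → 𝒮' be finitely-valued random variables (the channel output and the genie side information of user k). If ∑_{k∈𝒮} ( H[S_k] − H[Y_k | X_k] − I[S_k : X_all | ⟨X_k, Y_k⟩] ) ≤ 0, then ∑_{k∈𝒮} I[X_k : ⟨Y_k, S_k⟩] ≤ ∑_{k∈𝒮} ( H[Y_k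 | S_k] − H[S_k | ⟨Y_k, X_all⟩] ). -/
open MeasureTheory

/-- Conditional entropy `H[X | Y] = H[X, Y] − H[Y]`. -/
noncomputable def condEntropy {Ω S T : Type*} [MeasurableSpace Ω]
    [Fintype S] [MeasurableSpace S] [Fintype T] [MeasurableSpace T]
    (P : Measure Ω) (X : Ω → S) (Y : Ω → T) : ℝ :=
  entropy P (fun ω => (X ω, Y ω)) - entropy P Y

/-- Mutual information `I[X : Y] = H[X] + H[Y] − H[X, Y]`. -/
noncomputable def mutualInfo {Ω S T : Type*} [MeasurableSpace Ω]
    [Fintype S] [MeasurableSpace S] [Fintype T] [MeasurableSpace T]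
    (P : Measure Ω) (X : Ω → S) (Y : Ω → T) : ℝ :=
  entropy P X + entropy P Y - entropy P (fun ω => (X ω, Y ω))

/-!
By the chain rule,
`I[X_k : ⟨Y_k, S_k⟩] = H[S_k] + H[Y_k | S_k] − H[Y_k | X_k] − H[S_k | ⟨X_k, Y_k⟩]`.
Since `X_k` is a function of `X_all`, conditioning on `⟨X_all, X_k, Y_k⟩` is conditioning on
`⟨Y_k, X_all⟩`, so the last term is `I[S_k : X_all | ⟨X_k, Y_k⟩] + H[S_k | ⟨Y_k, X_all⟩]`.
Hence the two sides of the bound differ exactly by the sum assumed to be nonpositive.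
-/

section Entropy

variable {Ω S T U : Type*} [MeasurableSpace Ω]
  [Fintype S] [MeasurableSpace S]
  [Fintype T] [MeasurableSpace T]
  [Fintype U] [MeasurableSpace U]
  (P : Measure Ω) {X : Ω → S} {Y : Ω → T} {Z : Ω → U}

theorem entropy_prodMk_eq_add_condEntropy (X : Ω → S) (Y : Ω → T) :
    entropy P (fun ω => (X ω, Y ω)) = entropy P Y + condEntropy P X Y := by
  rw [condEntropy, add_sub_cancel]

theorem condMutualInfo_eq_condEntropy_sub_condEntropy (X : Ω → S) (Y : Ω → T) (Z : Ω → U) :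
    condMutualInfo P X Y Z = condEntropy P X Z - condEntropy P X (fun ω => (Y ω, Z ω)) := by
  simp only [condMutualInfo, condEntropy]
  ring

variable [MeasurableSingletonClass S] [MeasurableSingletonClass T] [MeasurableSingletonClass U]

theorem entropy_comp_of_injective (hX : AEMeasurable X P) {f : S → T}
    (hf : Function.Injective f) : entropy P (fun ω => f (X ω)) = entropy P X := by
  have hf_meas : Measurable f := measurable_of_finite f
  have map_singleton (t : T) : P.map (fun ω => f (X ω)) {t} = P.map X (f ⁻¹' {t}) := by
    rw [← Measure.map_apply hf_meas (measurableSet_singleton t),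
      AEMeasurable.map_map_of_aemeasurable hf_meas.aemeasurable hX, Function.comp_def]
  symm
  refine Fintype.sum_of_injective f hf _ _ (fun t ht => ?_) (fun x => ?_)
  · rw [map_singleton, Set.preimage_singleton_eq_empty.2 ht, measure_empty,
      ENNReal.toReal_zero, Real.negMulLog_zero]
  · rw [map_singleton, ← Set.image_singleton, hf.preimage_image]

theorem entropy_prodMk_comm (hX : AEMeasurable X P) (hY : AEMeasurable Y P) :
    entropy P (fun ω => (X ω, Y ω)) = entropy P (fun ω => (Y ω, X ω)) :=
  entropy_comp_of_injective P (hY.prodMk hX) Prod.swap_injective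

theorem condEntropy_comp_right_of_injective (hX : AEMeasurable X P) (hY : AEMeasurable Y P)
    {f : T → U} (hf : Function.Injective f) :
    condEntropy P X (fun ω => f (Y ω)) = condEntropy P X Y := by
  rw [condEntropy, condEntropy, entropy_comp_of_injective P hY hf]
  congr 1
  exact entropy_comp_of_injective P (hX.prodMk hY) (Function.injective_id.prodMap hf)

theorem mutualInfo_eq_entropy_sub_condEntropy (hX : AEMeasurable X P) (hY : AEMeasurable Y P) :
    mutualInfo P X Y = entropy P Y - condEntropy P Y X := by
  rw [mutualInfo, condEntropy, entropy_prodMk_comm P hX hY]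
  ring

theorem condEntropy_prodMk_left (hX : AEMeasurable X P) (hY : AEMeasurable Y P)
    (hZ : AEMeasurable Z P) :
    condEntropy P (fun ω => (X ω, Y ω)) Z =
      condEntropy P X Z + condEntropy P Y (fun ω => (Z ω, X ω)) := by
  have joint : entropy P (fun ω => ((X ω, Y ω), Z ω)) = entropy P (fun ω => (Y ω, Z ω, X ω)) :=
    entropy_comp_of_injective P (hY.prodMk (hZ.prodMk hX)) (f := fun p => ((p.2.2, p.1), p.2.1))
      (Function.LeftInverse.injective (g := fun q => (q.1.2, q.2, q.1.1)) fun _ => rfl)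
  rw [condEntropy, condEntropy, condEntropy, joint, entropy_prodMk_comm P hZ hX]
  ring

end Entropy

section Genie

variable {Ω 𝒜 𝒳 𝒴 𝒮' : Type*} [MeasurableSpace Ω]
  [Fintype 𝒜] [MeasurableSpace 𝒜] [MeasurableSingletonClass 𝒜]
  [Fintype 𝒳] [MeasurableSpace 𝒳] [MeasurableSingletonClass 𝒳]
  [Fintype 𝒴] [MeasurableSpace 𝒴] [MeasurableSingletonClass 𝒴]
  [Fintype 𝒮'] [MeasurableSpace 𝒮'] [MeasurableSingletonClass 𝒮']
  (P : Measure Ω) {A : Ω → 𝒜} {Y : Ω → 𝒴} {S : Ω → 𝒮'}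

theorem condEntropy_comp_prodMk_eq_condMutualInfo_add
    (hA : AEMeasurable A P) (hY : AEMeasurable Y P)
    (hS : AEMeasurable S P) (f : 𝒜 → 𝒳) :
    condEntropy P S (fun ω => (f (A ω), Y ω)) =
      condMutualInfo P S A (fun ω => (f (A ω), Y ω)) + condEntropy P S (fun ω => (Y ω, A ω)) := by
  have drop_f : condEntropy P S (fun ω => (A ω, f (A ω), Y ω)) =
      condEntropy P S (fun ω => (Y ω, A ω)) :=
    condEntropy_comp_right_of_injective P hS (hY.prodMk hA) (f := fun p => (p.2, f p.2, p.1))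
      (Function.LeftInverse.injective (g := fun q => (q.2.2, q.1)) fun _ => rfl)
  rw [condMutualInfo_eq_condEntropy_sub_condEntropy, drop_f, sub_add_cancel]

theorem mutualInfo_genie_eq_add_slack (hA : AEMeasurable A P) (hY : AEMeasurable Y P)
    (hS : AEMeasurable S P) (f : 𝒜 → 𝒳) :
    mutualInfo P (fun ω => f (A ω)) (fun ω => (Y ω, S ω)) =
      (condEntropy P Y S - condEntropy P S (fun ω => (Y ω, A ω))) +
        (entropy P S - condEntropy P Y (fun ω => f (A ω))
          - condMutualInfo P S A (fun ω => (f (A ω), Y ω))) := by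
  have hX : AEMeasurable (fun ω => f (A ω)) P := (measurable_of_finite f).comp_aemeasurable hA
  rw [mutualInfo_eq_entropy_sub_condEntropy P hX (hY.prodMk hS),
    entropy_prodMk_eq_add_condEntropy, condEntropy_prodMk_left P hY hS hX,
    condEntropy_comp_prodMk_eq_condMutualInfo_add P hA hY hS f]
  ring

end Genie

/-- The common variable `A` plays the role of `X_all`, and `f k` that of the projection onto the
input of user `k`. -/
theorem genie_aided_sum_bound_general {Ω 𝒜 ι : Type*} {𝒳 𝒴 𝒮' : ι → Type*}
    [MeasurableSpace Ω] [Fintype 𝒜] [MeasurableSpace 𝒜] [MeasurableSingletonClass 𝒜]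
    [∀ k, Fintype (𝒳 k)] [∀ k, MeasurableSpace (𝒳 k)] [∀ k, MeasurableSingletonClass (𝒳 k)]
    [∀ k, Fintype (𝒴 k)] [∀ k, MeasurableSpace (𝒴 k)] [∀ k, MeasurableSingletonClass (𝒴 k)]
    [∀ k, Fintype (𝒮' k)] [∀ k, MeasurableSpace (𝒮' k)] [∀ k, MeasurableSingletonClass (𝒮' k)]
    (P : Measure Ω) {A : Ω → 𝒜} (hA : AEMeasurable A P) (f : ∀ k, 𝒜 → 𝒳 k)
    {Y : ∀ k, Ω → 𝒴 k} (hY : ∀ k, AEMeasurable (Y k) P)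
    {S : ∀ k, Ω → 𝒮' k} (hS : ∀ k, AEMeasurable (S k) P) (𝒮 : Finset ι) :
    ∑ k ∈ 𝒮, mutualInfo P (fun ω => f k (A ω)) (fun ω => (Y k ω, S k ω)) ≤
        ∑ k ∈ 𝒮, (condEntropy P (Y k) (S k) - condEntropy P (S k) (fun ω => (Y k ω, A ω))) ↔
      ∑ k ∈ 𝒮, (entropy P (S k) - condEntropy P (Y k) (fun ω => f k (A ω))
        - condMutualInfo P (S k) A (fun ω => (f k (A ω), Y k ω))) ≤ 0 := by
  rw [Finset.sum_congr rfl fun k _ => mutualInfo_genie_eq_add_slack P hA (hY k) (hS k) (f k),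
    Finset.sum_add_distrib, add_le_iff_nonpos_right]

/-- Genie-aided sum-rate bound (step (a) of the proof of bound (11)):
if the genie signals `S_k` are chosen so that
`∑_{k∈𝒮} ( H[S_k] − H[Y_k | X_k] − I[S_k : X_all | ⟨X_k, Y_k⟩] ) ≤ 0`, then
`∑_{k∈𝒮} I[X_k : ⟨Y_k, S_k⟩] ≤ ∑_{k∈𝒮} ( H[Y_k | S_k] − H[S_k | ⟨Y_k, X_all⟩] )`. -/
theorem genie_aided_sum_bound
    {Ω 𝒳 𝒴 𝒮' : Type*} [MeasurableSpace Ω]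
    [Fintype 𝒳] [MeasurableSpace 𝒳] [MeasurableSingletonClass 𝒳]
    [Fintype 𝒴] [MeasurableSpace 𝒴] [MeasurableSingletonClass 𝒴]
    [Fintype 𝒮'] [MeasurableSpace 𝒮'] [MeasurableSingletonClass 𝒮']
    (K : ℕ) (hK : 1 ≤ K)
    (X : Fin K → Ω → 𝒳) (hX : ∀ k, Measurable (X k))
    (Y : Fin K → Ω → 𝒴) (hY : ∀ k, Measurable (Y k))
    (S : Fin K → Ω → 𝒮') (hS : ∀ k, Measurable (S k))
    (𝒮 : Finset (Fin K)) (h𝒮 : 𝒮.Nonempty)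
    (P : Measure Ω) [IsProbabilityMeasure P]
    (hgenie : ∑ k ∈ 𝒮,
        (entropy P (S k) - condEntropy P (Y k) (X k)
          - condMutualInfo P (S k) (fun ω (i : Fin K) => X i ω)
              (fun ω => (X k ω, Y k ω))) ≤ 0) :
    ∑ k ∈ 𝒮, mutualInfo P (X k) (fun ω => (Y k ω, S k ω)) ≤
      ∑ k ∈ 𝒮, (condEntropy P (Y k) (S k)
        - condEntropy P (S k) (fun ω => (Y k ω, fun i : Fin K => X i ω))) := by
  have hA : Measurable (fun ω (i : Fin K) => X i ω) := measurable_pi_lambda _ hX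
  exact (genie_aided_sum_bound_general P hA.aemeasurable (fun k x => x k)
    (fun k => (hY k).aemeasurable) (fun k => (hS k).aemeasurable) 𝒮).2 hgenie
end

section
/- Let K ≥ 1 and let Σ be a K × K complex Hermitian matrix with all diagonal entries equal to 1 such that, for every k ∈ [2:K], the vector ρ_{k−1} ∈ ℂ^{k−1} consisting of the first k−1 entries of the k-th column of Σ satisfies: the leading principal (k−1) × (k−1) submatrix of Σ minus the outer product ρ_{k−1}ρ_{k−1}ᴴ is positive semidefinite. Then Σ is positive semidefinite. -/
open scoped ComplexOrder

/-!
Eliminating the unit entry in the last diagonal position of a Hermitian matrix `A` leaves the Schur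
complement `S = A₀ - ρρᴴ`, where `A₀` is the leading principal submatrix and `ρ` the rest of the
last column. With `E` the inclusion of the leading coordinates and `F` the last column of `A`, one
has `A = E S Eᴴ + F Fᴴ`, which is positive semidefinite when `S` is. Conversely, `S` is a congruence
transform of `A`: it is `G A Gᴴ` for `G = [1, -ρ]`.
-/

open Matrix

section SchurComplement

variable {R m n : Type*} [Ring R] [StarRing R] [Fintype n] [DecidableEq n]

section Congruence

variable [Fintype m] [DecidableEq m]

lemma fromBlocks_one₂₂_eq_mul_sub_mul_add (A : Matrix m m R) (B : Matrix m n R) :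
    fromBlocks A B Bᴴ 1 =
      (fromRows 1 0 : Matrix (m ⊕ n) m R) * (A - B * Bᴴ) * (fromRows 1 0 : Matrix (m ⊕ n) m R)ᴴ +
        (fromRows B 1 : Matrix (m ⊕ n) n R) * (fromRows B 1 : Matrix (m ⊕ n) n R)ᴴ := by
  rw [conjTranspose_fromRows_eq_fromCols_conjTranspose,
    conjTranspose_fromRows_eq_fromCols_conjTranspose, fromRows_mul _ _ (A - B * Bᴴ),
    fromRows_mul_fromCols, fromRows_mul_fromCols, fromBlocks_add]
  simp

lemma sub_mul_conjTranspose_eq_mul_fromBlocks_one₂₂_mul (A : Matrix m m R) (B : Matrix m n R) :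
    A - B * Bᴴ =
      (fromCols 1 (-B) : Matrix m (m ⊕ n) R) * fromBlocks A B Bᴴ 1 *
        (fromCols 1 (-B) : Matrix m (m ⊕ n) R)ᴴ := by
  simp [conjTranspose_fromCols_eq_fromRows_conjTranspose, fromCols_mul_fromBlocks,
    fromCols_mul_fromRows, sub_eq_add_neg]

end Congruence

lemma posSemidef_fromBlocks_one₂₂_iff [Finite m] [PartialOrder R] [StarOrderedRing R]
    (A : Matrix m m R) (B : Matrix m n R) :
    (fromBlocks A B Bᴴ 1).PosSemidef ↔ (A - B * Bᴴ).PosSemidef := by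
  have := Fintype.ofFinite m
  classical
  constructor <;> intro h
  · rw [sub_mul_conjTranspose_eq_mul_fromBlocks_one₂₂_mul]
    exact h.mul_mul_conjTranspose_same _
  · rw [fromBlocks_one₂₂_eq_mul_sub_mul_add]
    exact (h.mul_mul_conjTranspose_same _).add (posSemidef_self_mul_conjTranspose _)

end SchurComplement

section LastColumn

variable {R : Type*} [Ring R] [StarRing R] {n : ℕ} {A : Matrix (Fin (n + 1)) (Fin (n + 1)) R}

lemma submatrix_finSumFinEquiv_eq_fromBlocks_of_last_eq_one (hA : A.IsHermitian)
    (hlast : A (Fin.last n) (Fin.last n) = 1) :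
    A.submatrix finSumFinEquiv finSumFinEquiv =
      fromBlocks (A.submatrix Fin.castSucc Fin.castSucc)
        (replicateCol (Fin 1) fun i : Fin n ↦ A i.castSucc (Fin.last n))
        (replicateCol (Fin 1) fun i : Fin n ↦ A i.castSucc (Fin.last n))ᴴ 1 := by
  have natAdd_eq_last (i : Fin 1) : Fin.natAdd n i = Fin.last n := by
    rw [Subsingleton.elim i 0]; rfl
  ext (i | i) (j | j)
  · rfl
  · simp [natAdd_eq_last, Fin.castSucc]
  · simpa [natAdd_eq_last, Fin.castSucc] using (hA.apply (Fin.last n) j.castSucc).symm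
  · simp [natAdd_eq_last, hlast, Subsingleton.elim i j]

theorem recursive_covariance_posSemidef_general [PartialOrder R] [StarOrderedRing R]
    (hA : A.IsHermitian) (hlast : A (Fin.last n) (Fin.last n) = 1) :
    A.PosSemidef ↔
      (A.submatrix Fin.castSucc Fin.castSucc -
        vecMulVec (fun i : Fin n ↦ A i.castSucc (Fin.last n))
          (star fun i : Fin n ↦ A i.castSucc (Fin.last n))).PosSemidef := by
  rw [← posSemidef_submatrix_equiv finSumFinEquiv,
    submatrix_finSumFinEquiv_eq_fromBlocks_of_last_eq_one hA hlast, posSemidef_fromBlocks_one₂₂_iff,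
    conjTranspose_replicateCol, vecMulVec_eq (Fin 1)]
  rfl

end LastColumn

/-- Let `A` be a `K × K` complex Hermitian matrix with unit diagonal such
that for every column `k` the leading principal submatrix of size `k` (rows/columns with
index `< k`) minus the rank-one outer product `ρₖρₖᴴ` of the first `k` entries of the `k`-th
column is positive semidefinite.  Then `A` is positive semidefinite.
(Here `k` ranges over all of `Fin K`; for `k = 0` the condition is on the empty matrix and is
vacuous, so the conditions match the paper's `k ∈ [2:K]` after reindexing.) -/
theorem recursive_covariance_posSemidef {K : ℕ} (hK : 1 ≤ K)
    (A : Matrix (Fin K) (Fin K) ℂ)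
    (hherm : A.IsHermitian) (hdiag : ∀ i, A i i = 1)
    (hcols : ∀ k : Fin K,
      ((Matrix.of fun i j : Fin k.val =>
          A (Fin.castLE k.isLt.le i) (Fin.castLE k.isLt.le j)) -
        Matrix.vecMulVec (fun i : Fin k.val => A (Fin.castLE k.isLt.le i) k)
          (star fun i : Fin k.val => A (Fin.castLE k.isLt.le i) k)).PosSemidef) :
    A.PosSemidef := by
  obtain ⟨n, rfl⟩ := Nat.exists_eq_add_of_le' hK
  exact (recursive_covariance_posSemidef_general hherm (hdiag _)).2 (hcols (Fin.last n))
end
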